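/- arXiv:1906.10888 — 6 statements merged into one kernel-verified Lean document; each statement's English description precedes it below -/
import Mathlib

section
/- Let N ≥ 0 and M ≥ 1 be integers, Δt > 0, let J ⊂ ℤ be a finite set with weights ν_j ≥ 0 (j ∈ J) satisfying Δt·Σ_{j∈J} ν_j ≤ 1, and for each n ∈ {0,…,M−1}, i ∈ {0,…,N} let b_{n,i} ≥ 0, c_{n,i} ≥ 0 and a_{n,i} = b_{n,i} + c_{n,i}. If (u^n)_{0≤n≤M} is a solution of the explicit–implicit scheme with bounded initial data u^0, then the scheme is stable: for every n ∈ {0,…,M}, sup_{i∈ℤ} |u^n_i| ≤ sup_{i∈ℤ} |u^0_i|. -/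
open Finset

/-- `u` is a solution of the explicit–implicit scheme with parameters `N, M, Δt`,
jump set `J` with weights `ν`, and coefficients `a n i = b n i + c n i`:
`u n i = 0` whenever `i ∉ {0,…,N}`, and for `n ∈ {0,…,M−1}`, `i ∈ {0,…,N}`,
`−c_{n,i}Δt·u^{n+1}_{i−1} + (1 + a_{n,i}Δt)·u^{n+1}_i − b_{n,i}Δt·u^{n+1}_{i+1}
  = (1 − Δt·Σ_{j∈J} ν_j)·u^n_i + Δt·Σ_{j∈J} ν_j·u^n_{i+j}`. -/
def IsExplicitImplicitSol (N M : ℕ) (Δt : ℝ) (J : Finset ℤ) (ν : ℤ → ℝ)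
    (a b c : ℕ → ℤ → ℝ) (u : ℕ → ℤ → ℝ) : Prop :=
  (∀ n, n ≤ M → ∀ i : ℤ, ¬ (0 ≤ i ∧ i ≤ (N : ℤ)) → u n i = 0) ∧
  (∀ n, n < M → ∀ i : ℤ, 0 ≤ i → i ≤ (N : ℤ) →
    -(c n i * Δt) * u (n + 1) (i - 1) + (1 + a n i * Δt) * u (n + 1) i
        - b n i * Δt * u (n + 1) (i + 1)
      = (1 - Δt * ∑ j ∈ J, ν j) * u n i + Δt * ∑ j ∈ J, ν j * u n (i + j))

/-- The explicit part of the scheme does not increase a uniform bound. -/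
lemma abs_explicit_step_le {Δt K : ℝ} (hΔt : 0 ≤ Δt) {J : Finset ℤ} {ν : ℤ → ℝ}
    (hν : ∀ j ∈ J, 0 ≤ ν j) (hCFL : Δt * ∑ j ∈ J, ν j ≤ 1)
    {v : ℤ → ℝ} (hv : ∀ i, |v i| ≤ K) (i : ℤ) :
    |(1 - Δt * ∑ j ∈ J, ν j) * v i + Δt * ∑ j ∈ J, ν j * v (i + j)| ≤ K := by
  have hsum : |∑ j ∈ J, ν j * v (i + j)| ≤ (∑ j ∈ J, ν j) * K := by
    rw [Finset.sum_mul]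
    refine (Finset.abs_sum_le_sum_abs _ _).trans (Finset.sum_le_sum fun j hj => ?_)
    rw [abs_mul, abs_of_nonneg (hν j hj)]
    exact mul_le_mul_of_nonneg_left (hv _) (hν j hj)
  calc _ ≤ |(1 - Δt * ∑ j ∈ J, ν j) * v i| + |Δt * ∑ j ∈ J, ν j * v (i + j)| := abs_add_le _ _
    _ = (1 - Δt * ∑ j ∈ J, ν j) * |v i| + Δt * |∑ j ∈ J, ν j * v (i + j)| := by
      rw [abs_mul, abs_mul, abs_of_nonneg (sub_nonneg.2 hCFL), abs_of_nonneg hΔt]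
    _ ≤ (1 - Δt * ∑ j ∈ J, ν j) * K + Δt * ((∑ j ∈ J, ν j) * K) :=
      add_le_add (mul_le_mul_of_nonneg_left (hv i) (sub_nonneg.2 hCFL))
        (mul_le_mul_of_nonneg_left hsum hΔt)
    _ = K := by ring

/-- If `x` dominates its neighbours in absolute value, then the implicit operator applied at `x`
dominates `|x|`. -/
lemma abs_le_abs_implicit {p q x y z : ℝ} (hp : 0 ≤ p) (hq : 0 ≤ q)
    (hy : |y| ≤ |x|) (hz : |z| ≤ |x|) :
    |x| ≤ |-p * y + (1 + (q + p)) * x - q * z| := by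
  have hpy : |p * y| ≤ p * |x| := by
    rw [abs_mul, abs_of_nonneg hp]
    exact mul_le_mul_of_nonneg_left hy hp
  have hqz : |q * z| ≤ q * |x| := by
    rw [abs_mul, abs_of_nonneg hq]
    exact mul_le_mul_of_nonneg_left hz hq
  have hx : |(1 + (q + p)) * x| = (1 + (q + p)) * |x| := by
    rw [abs_mul, abs_of_nonneg (by positivity)]
  have h₁ := abs_sub_abs_le_abs_sub ((1 + (q + p)) * x) (p * y + q * z)
  have h₂ := abs_add_le (p * y) (q * z)
  have h₃ : -p * y + (1 + (q + p)) * x - q * z = (1 + (q + p)) * x - (p * y + q * z) := by ring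
  rw [h₃]
  linarith

/-- A uniform bound on the initial data propagates to every time level. -/
lemma IsExplicitImplicitSol.abs_le {N M : ℕ} {Δt : ℝ} (hΔt : 0 ≤ Δt)
    {J : Finset ℤ} {ν : ℤ → ℝ} (hν : ∀ j ∈ J, 0 ≤ ν j) (hCFL : Δt * ∑ j ∈ J, ν j ≤ 1)
    {a b c : ℕ → ℤ → ℝ}
    (hb : ∀ n, n < M → ∀ i : ℤ, 0 ≤ i → i ≤ (N : ℤ) → 0 ≤ b n i)
    (hc : ∀ n, n < M → ∀ i : ℤ, 0 ≤ i → i ≤ (N : ℤ) → 0 ≤ c n i)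
    (ha : ∀ n, n < M → ∀ i : ℤ, 0 ≤ i → i ≤ (N : ℤ) → a n i = b n i + c n i)
    {u : ℕ → ℤ → ℝ} (hu : IsExplicitImplicitSol N M Δt J ν a b c u)
    {K : ℝ} (h0 : ∀ i, |u 0 i| ≤ K) : ∀ n, n ≤ M → ∀ i, |u n i| ≤ K := by
  intro n
  induction n with
  | zero => exact fun _ => h0
  | succ n ih =>
    intro hn
    obtain ⟨m, hm, hmax⟩ := (Finset.Icc (0 : ℤ) N).exists_max_image (fun i => |u (n + 1) i|)
      ⟨0, by simp⟩
    rw [Finset.mem_Icc] at hm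
    have hdom : ∀ i, |u (n + 1) i| ≤ |u (n + 1) m| := by
      intro i
      by_cases hi : 0 ≤ i ∧ i ≤ (N : ℤ)
      · exact hmax i (Finset.mem_Icc.2 hi)
      · rw [hu.1 _ hn i hi, abs_zero]
        exact abs_nonneg _
    have hstep := abs_le_abs_implicit (mul_nonneg (hc n hn m hm.1 hm.2) hΔt)
      (mul_nonneg (hb n hn m hm.1 hm.2) hΔt) (hdom (m - 1)) (hdom (m + 1))
    rw [← add_mul, ← ha n hn m hm.1 hm.2, hu.2 n hn m hm.1 hm.2] at hstep
    exact fun i => (hdom i).trans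
      (hstep.trans (abs_explicit_step_le hΔt hν hCFL (ih (Nat.le_of_succ_le hn)) m))

/-- **Stability of the explicit–implicit scheme.** -/
theorem stability_explicit_implicit_scheme
    (N M : ℕ) (hM : 1 ≤ M) (Δt : ℝ) (hΔt : 0 < Δt)
    (J : Finset ℤ) (ν : ℤ → ℝ) (hν : ∀ j ∈ J, 0 ≤ ν j)
    (hCFL : Δt * ∑ j ∈ J, ν j ≤ 1)
    (a b c : ℕ → ℤ → ℝ)
    (hb : ∀ n, n < M → ∀ i : ℤ, 0 ≤ i → i ≤ (N : ℤ) → 0 ≤ b n i)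
    (hc : ∀ n, n < M → ∀ i : ℤ, 0 ≤ i → i ≤ (N : ℤ) → 0 ≤ c n i)
    (ha : ∀ n, n < M → ∀ i : ℤ, 0 ≤ i → i ≤ (N : ℤ) → a n i = b n i + c n i)
    (u : ℕ → ℤ → ℝ)
    (hu : IsExplicitImplicitSol N M Δt J ν a b c u)
    (hbdd : BddAbove (Set.range fun i : ℤ => |u 0 i|)) :
    ∀ n, n ≤ M → (⨆ i : ℤ, |u n i|) ≤ ⨆ i : ℤ, |u 0 i| := by
  exact fun n hn => ciSup_le
    (hu.abs_le hΔt.le hν hCFL hb hc ha (fun i => le_ciSup hbdd i) n hn)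
end

section
/- Let N ≥ 0 and M ≥ 1 be integers, Δt > 0, let J ⊂ ℤ be a finite set with weights ν_j ≥ 0 (j ∈ J) satisfying Δt·Σ_{j∈J} ν_j ≤ 1, and for each n ∈ {0,…,M−1}, i ∈ {0,…,N} let b_{n,i} ≥ 0, c_{n,i} ≥ 0 and a_{n,i} = b_{n,i} + c_{n,i}. If (u^n) and (v^n) are two solutions of the explicit–implicit scheme (with the same coefficients and weights) whose initial data satisfy u^0_i ≥ v^0_i for every i ∈ ℤ, then the scheme is monotone: u^n_i ≥ v^n_i for every n ∈ {0,…,M} and every i ∈ ℤ. -/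
open Finset

/-- **Discrete minimum principle**: a function vanishing outside `{0, …, N}` which is a
supersolution of a tridiagonal operator with nonnegative rates is nonnegative. -/
theorem nonneg_of_tridiagonal_supersolution (N : ℕ) (w β γ : ℤ → ℝ)
    (hw : ∀ i : ℤ, ¬ (0 ≤ i ∧ i ≤ (N : ℤ)) → w i = 0)
    (hβ : ∀ i : ℤ, 0 ≤ i → i ≤ (N : ℤ) → 0 ≤ β i)
    (hγ : ∀ i : ℤ, 0 ≤ i → i ≤ (N : ℤ) → 0 ≤ γ i)
    (h : ∀ i : ℤ, 0 ≤ i → i ≤ (N : ℤ) →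
      0 ≤ w i + γ i * (w i - w (i - 1)) + β i * (w i - w (i + 1))) (i : ℤ) : 0 ≤ w i := by
  obtain ⟨k, hk, hmin⟩ := (Finset.Icc (0 : ℤ) N).exists_min_image w ⟨0, by simp⟩
  rw [Finset.mem_Icc] at hk
  have hk_nonneg : 0 ≤ w k := by
    by_contra! hneg
    have hle : ∀ j, w k ≤ w j := fun j => by
      by_cases hj : 0 ≤ j ∧ j ≤ (N : ℤ)
      · exact hmin j (Finset.mem_Icc.mpr hj)
      · exact (hw j hj).symm ▸ hneg.le
    have h₁ := mul_nonneg (hγ k hk.1 hk.2) (sub_nonneg.mpr (hle (k - 1)))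
    have h₂ := mul_nonneg (hβ k hk.1 hk.2) (sub_nonneg.mpr (hle (k + 1)))
    linarith [h k hk.1 hk.2]
  by_cases hi : 0 ≤ i ∧ i ≤ (N : ℤ)
  · exact hk_nonneg.trans (hmin i (Finset.mem_Icc.mpr hi))
  · exact (hw i hi).ge

/-- **Monotonicity of the explicit–implicit scheme**: if two solutions are ordered at time
`0`, they remain ordered at all later times. -/
theorem monotonicity_explicit_implicit_scheme
    (N M : ℕ) (hM : 1 ≤ M) (Δt : ℝ) (hΔt : 0 < Δt)
    (J : Finset ℤ) (ν : ℤ → ℝ) (hν : ∀ j ∈ J, 0 ≤ ν j)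
    (hCFL : Δt * ∑ j ∈ J, ν j ≤ 1)
    (a b c : ℕ → ℤ → ℝ)
    (hb : ∀ n, n < M → ∀ i : ℤ, 0 ≤ i → i ≤ (N : ℤ) → 0 ≤ b n i)
    (hc : ∀ n, n < M → ∀ i : ℤ, 0 ≤ i → i ≤ (N : ℤ) → 0 ≤ c n i)
    (ha : ∀ n, n < M → ∀ i : ℤ, 0 ≤ i → i ≤ (N : ℤ) → a n i = b n i + c n i)
    (u v : ℕ → ℤ → ℝ)
    (hu : IsExplicitImplicitSol N M Δt J ν a b c u)
    (hv : IsExplicitImplicitSol N M Δt J ν a b c v)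
    (h0 : ∀ i : ℤ, v 0 i ≤ u 0 i) :
    ∀ n, n ≤ M → ∀ i : ℤ, v n i ≤ u n i := by
  intro n
  induction n with
  | zero => exact fun _ => h0
  | succ n ih =>
    intro hn i
    have hnM : n < M := hn
    have hprev := ih hnM.le
    refine sub_nonneg.mp (nonneg_of_tridiagonal_supersolution N
      (fun i => u (n + 1) i - v (n + 1) i) (fun i => b n i * Δt) (fun i => c n i * Δt)
      (fun i hi => by simp [hu.1 _ hn i hi, hv.1 _ hn i hi])
      (fun i hi hi' => mul_nonneg (hb n hnM i hi hi') hΔt.le)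
      (fun i hi hi' => mul_nonneg (hc n hnM i hi hi') hΔt.le) (fun i hi hi' => ?_) i)
    have hdiag : (1 - Δt * ∑ j ∈ J, ν j) * v n i ≤ (1 - Δt * ∑ j ∈ J, ν j) * u n i :=
      mul_le_mul_of_nonneg_left (hprev i) (sub_nonneg.mpr hCFL)
    have hjump : Δt * ∑ j ∈ J, ν j * v n (i + j) ≤ Δt * ∑ j ∈ J, ν j * u n (i + j) :=
      mul_le_mul_of_nonneg_left
        (Finset.sum_le_sum fun j hj => mul_le_mul_of_nonneg_left (hprev (i + j)) (hν j hj)) hΔt.le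
    have hequ := hu.2 n hnM i hi hi'
    have heqv := hv.2 n hnM i hi hi'
    rw [ha n hnM i hi hi'] at hequ heqv
    linarith
end

section
/- Let N ≥ 0 and M ≥ 1 be integers, Δt > 0, let J ⊂ ℤ be a finite set with weights ν_j ≥ 0 (j ∈ J) satisfying Δt·Σ_{j∈J} ν_j ≤ 1, and for each n ∈ {0,…,M−1}, i ∈ {0,…,N} let b_{n,i} ≥ 0, c_{n,i} ≥ 0 and a_{n,i} = b_{n,i} + c_{n,i}. Let (u^n) be a solution of the explicit–implicit scheme, let (w^n) be a discrete supersolution with w^0_i ≥ u^0_i for all i ∈ {0,…,N}, and let (z^n) be a discrete subsolution with z^0_i ≤ u^0_i for all i ∈ {0,…,N}. Then z^n_i ≤ u^n_i ≤ w^n_i for every n ∈ {0,…,M} and every i ∈ ℤ. -/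
open Finset

/-- `w` is a discrete supersolution of the explicit–implicit scheme:
nonnegative outside `{0,…,N}` and the scheme relation holds with `≥`. -/
def IsDiscreteSupersol (N M : ℕ) (Δt : ℝ) (J : Finset ℤ) (ν : ℤ → ℝ)
    (a b c : ℕ → ℤ → ℝ) (w : ℕ → ℤ → ℝ) : Prop :=
  (∀ n, n ≤ M → ∀ i : ℤ, ¬ (0 ≤ i ∧ i ≤ (N : ℤ)) → 0 ≤ w n i) ∧
  (∀ n, n < M → ∀ i : ℤ, 0 ≤ i → i ≤ (N : ℤ) →
    -(c n i * Δt) * w (n + 1) (i - 1) + (1 + a n i * Δt) * w (n + 1) i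
        - b n i * Δt * w (n + 1) (i + 1)
      ≥ (1 - Δt * ∑ j ∈ J, ν j) * w n i + Δt * ∑ j ∈ J, ν j * w n (i + j))

/-- `z` is a discrete subsolution of the explicit–implicit scheme:
nonpositive outside `{0,…,N}` and the scheme relation holds with `≤`. -/
def IsDiscreteSubsol (N M : ℕ) (Δt : ℝ) (J : Finset ℤ) (ν : ℤ → ℝ)
    (a b c : ℕ → ℤ → ℝ) (z : ℕ → ℤ → ℝ) : Prop :=
  (∀ n, n ≤ M → ∀ i : ℤ, ¬ (0 ≤ i ∧ i ≤ (N : ℤ)) → z n i ≤ 0) ∧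
  (∀ n, n < M → ∀ i : ℤ, 0 ≤ i → i ≤ (N : ℤ) →
    -(c n i * Δt) * z (n + 1) (i - 1) + (1 + a n i * Δt) * z (n + 1) i
        - b n i * Δt * z (n + 1) (i + 1)
      ≤ (1 - Δt * ∑ j ∈ J, ν j) * z n i + Δt * ∑ j ∈ J, ν j * z n (i + j))

/-- Discrete maximum principle for the implicit tridiagonal operator. -/
lemma nonneg_of_tridiagonal_nonneg {N : ℕ} {α β γ v : ℤ → ℝ}
    (hβ : ∀ i : ℤ, 0 ≤ i → i ≤ (N : ℤ) → 0 ≤ β i)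
    (hγ : ∀ i : ℤ, 0 ≤ i → i ≤ (N : ℤ) → 0 ≤ γ i)
    (hα : ∀ i : ℤ, 0 ≤ i → i ≤ (N : ℤ) → α i = β i + γ i)
    (hout : ∀ i : ℤ, ¬ (0 ≤ i ∧ i ≤ (N : ℤ)) → 0 ≤ v i)
    (hv : ∀ i : ℤ, 0 ≤ i → i ≤ (N : ℤ) →
      0 ≤ -γ i * v (i - 1) + (1 + α i) * v i - β i * v (i + 1)) (i : ℤ) :
    0 ≤ v i := by
  obtain ⟨k, hk, hmin⟩ := (Finset.Icc (0 : ℤ) N).exists_min_image v ⟨0, by simp⟩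
  simp only [Finset.mem_Icc] at hk hmin
  have hk0 : 0 ≤ v k := by
    by_contra! hneg
    have hle (j : ℤ) : v k ≤ v j := by
      by_cases hj : 0 ≤ j ∧ j ≤ (N : ℤ)
      · exact hmin j hj
      · exact hneg.le.trans (hout j hj)
    have h := hv k hk.1 hk.2
    rw [hα k hk.1 hk.2] at h
    have hγk := mul_le_mul_of_nonneg_left (hle (k - 1)) (hγ k hk.1 hk.2)
    have hβk := mul_le_mul_of_nonneg_left (hle (k + 1)) (hβ k hk.1 hk.2)
    linarith
  by_cases hi : 0 ≤ i ∧ i ≤ (N : ℤ)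
  · exact hk0.trans (hmin i hi)
  · exact hout i hi

/-- A discrete supersolution with nonnegative initial data is nonnegative. -/
lemma IsDiscreteSupersol.nonneg {N M : ℕ} {Δt : ℝ} (hΔt : 0 ≤ Δt)
    {J : Finset ℤ} {ν : ℤ → ℝ} (hν : ∀ j ∈ J, 0 ≤ ν j)
    (hCFL : Δt * ∑ j ∈ J, ν j ≤ 1) {a b c : ℕ → ℤ → ℝ}
    (hb : ∀ n, n < M → ∀ i : ℤ, 0 ≤ i → i ≤ (N : ℤ) → 0 ≤ b n i)
    (hc : ∀ n, n < M → ∀ i : ℤ, 0 ≤ i → i ≤ (N : ℤ) → 0 ≤ c n i)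
    (ha : ∀ n, n < M → ∀ i : ℤ, 0 ≤ i → i ≤ (N : ℤ) → a n i = b n i + c n i)
    {v : ℕ → ℤ → ℝ} (hv : IsDiscreteSupersol N M Δt J ν a b c v)
    (hv0 : ∀ i : ℤ, 0 ≤ i → i ≤ (N : ℤ) → 0 ≤ v 0 i) :
    ∀ n, n ≤ M → ∀ i : ℤ, 0 ≤ v n i := by
  intro n
  induction n with
  | zero =>
    intro hn i
    by_cases hi : 0 ≤ i ∧ i ≤ (N : ℤ)
    · exact hv0 i hi.1 hi.2
    · exact hv.1 0 hn i hi
  | succ n ih =>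
    intro hn
    have hpos := ih (by omega)
    refine nonneg_of_tridiagonal_nonneg (α := fun i => a n i * Δt)
      (β := fun i => b n i * Δt) (γ := fun i => c n i * Δt)
      (fun i h0 h1 => mul_nonneg (hb n hn i h0 h1) hΔt)
      (fun i h0 h1 => mul_nonneg (hc n hn i h0 h1) hΔt)
      (fun i h0 h1 => by simp only [ha n hn i h0 h1, add_mul])
      (hv.1 (n + 1) hn) fun i h0 h1 => ?_
    refine le_trans ?_ (hv.2 n hn i h0 h1)
    exact add_nonneg (mul_nonneg (sub_nonneg.2 hCFL) (hpos i))
      (mul_nonneg hΔt (Finset.sum_nonneg fun j hj => mul_nonneg (hν j hj) (hpos (i + j))))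

/-- The difference of a supersolution and a subsolution is a supersolution. -/
lemma IsDiscreteSupersol.sub {N M : ℕ} {Δt : ℝ} {J : Finset ℤ} {ν : ℤ → ℝ}
    {a b c w z : ℕ → ℤ → ℝ} (hw : IsDiscreteSupersol N M Δt J ν a b c w)
    (hz : IsDiscreteSubsol N M Δt J ν a b c z) :
    IsDiscreteSupersol N M Δt J ν a b c (fun n i => w n i - z n i) := by
  refine ⟨fun n hn i hi => sub_nonneg.2 ((hz.1 n hn i hi).trans (hw.1 n hn i hi)),
    fun n hn i h0 h1 => ?_⟩
  have hwi := hw.2 n hn i h0 h1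
  have hzi := hz.2 n hn i h0 h1
  simp only [mul_sub, Finset.sum_sub_distrib]
  linarith

lemma IsExplicitImplicitSol.isDiscreteSupersol {N M : ℕ} {Δt : ℝ} {J : Finset ℤ} {ν : ℤ → ℝ}
    {a b c u : ℕ → ℤ → ℝ} (hu : IsExplicitImplicitSol N M Δt J ν a b c u) :
    IsDiscreteSupersol N M Δt J ν a b c u :=
  ⟨fun n hn i hi => (hu.1 n hn i hi).ge, fun n hn i h0 h1 => (hu.2 n hn i h0 h1).ge⟩

lemma IsExplicitImplicitSol.isDiscreteSubsol {N M : ℕ} {Δt : ℝ} {J : Finset ℤ} {ν : ℤ → ℝ}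
    {a b c u : ℕ → ℤ → ℝ} (hu : IsExplicitImplicitSol N M Δt J ν a b c u) :
    IsDiscreteSubsol N M Δt J ν a b c u :=
  ⟨fun n hn i hi => (hu.1 n hn i hi).le, fun n hn i h0 h1 => (hu.2 n hn i h0 h1).le⟩

/-- **Discrete comparison principle**: a solution of the explicit–implicit scheme is
sandwiched between any discrete subsolution and supersolution ordered at time `0`. -/
theorem discrete_comparison_principle
    (N M : ℕ) (hM : 1 ≤ M) (Δt : ℝ) (hΔt : 0 < Δt)
    (J : Finset ℤ) (ν : ℤ → ℝ) (hν : ∀ j ∈ J, 0 ≤ ν j)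
    (hCFL : Δt * ∑ j ∈ J, ν j ≤ 1)
    (a b c : ℕ → ℤ → ℝ)
    (hb : ∀ n, n < M → ∀ i : ℤ, 0 ≤ i → i ≤ (N : ℤ) → 0 ≤ b n i)
    (hc : ∀ n, n < M → ∀ i : ℤ, 0 ≤ i → i ≤ (N : ℤ) → 0 ≤ c n i)
    (ha : ∀ n, n < M → ∀ i : ℤ, 0 ≤ i → i ≤ (N : ℤ) → a n i = b n i + c n i)
    (u w z : ℕ → ℤ → ℝ)
    (hu : IsExplicitImplicitSol N M Δt J ν a b c u)
    (hw : IsDiscreteSupersol N M Δt J ν a b c w)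
    (hz : IsDiscreteSubsol N M Δt J ν a b c z)
    (hw0 : ∀ i : ℤ, 0 ≤ i → i ≤ (N : ℤ) → u 0 i ≤ w 0 i)
    (hz0 : ∀ i : ℤ, 0 ≤ i → i ≤ (N : ℤ) → z 0 i ≤ u 0 i) :
    ∀ n, n ≤ M → ∀ i : ℤ, z n i ≤ u n i ∧ u n i ≤ w n i := by
  intro n hn i
  constructor
  · exact sub_nonneg.1 ((hu.isDiscreteSupersol.sub hz).nonneg hΔt.le hν hCFL hb hc ha
      (fun i h0 h1 => sub_nonneg.2 (hz0 i h0 h1)) n hn i)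
  · exact sub_nonneg.1 ((hw.sub hu.isDiscreteSubsol).nonneg hΔt.le hν hCFL hb hc ha
      (fun i h0 h1 => sub_nonneg.2 (hw0 i h0 h1)) n hn i)
end

section
/- Let (Ω, ℱ, ℚ) be a probability space, let S : Ω → ℝ be a nonnegative random variable with C = E[e^S] < ∞, let H : ℝ → ℝ be a bounded measurable function with ‖H‖_∞ = sup_t |H(t)|, let Y : Ω → ℝ be a random variable, let x ∈ ℝ, and let M : Ω → ℝ be a random variable satisfying M ≤ |x| + S almost surely. Then for every A ∈ ℝ, the localization error satisfies | E[H(Y)] − E[𝟙_{{M < A}}·H(Y)] | ≤ C·‖H‖_∞·e^{−A + |x|}. -/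
open MeasureTheory

/-- **Localization error estimate.** If `M ≤ |x| + S` a.s. with `S ≥ 0` and
`C = E[e^S] < ∞`, and `H` is bounded measurable, then for every `A`,
`|E[H(Y)] − E[1_{M<A}·H(Y)]| ≤ C·‖H‖_∞·e^{−A+|x|}`. -/
theorem localization_error_estimate
    {Ω : Type*} [MeasurableSpace Ω] (Q : Measure Ω) [IsProbabilityMeasure Q]
    (S : Ω → ℝ) (hSmeas : Measurable S) (hSnonneg : ∀ ω, 0 ≤ S ω)
    (hSint : Integrable (fun ω => Real.exp (S ω)) Q)
    (H : ℝ → ℝ) (hHmeas : Measurable H)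
    (hHbdd : BddAbove (Set.range fun t => |H t|))
    (Y : Ω → ℝ) (hYmeas : Measurable Y) (x : ℝ)
    (M : Ω → ℝ) (hMmeas : Measurable M)
    (hM : ∀ᵐ ω ∂Q, M ω ≤ |x| + S ω)
    (A : ℝ) :
    |(∫ ω, H (Y ω) ∂Q) - ∫ ω, Set.indicator {ω | M ω < A} (fun ω => H (Y ω)) ω ∂Q|
      ≤ (∫ ω, Real.exp (S ω) ∂Q) * (⨆ t : ℝ, |H t|) * Real.exp (-A + |x|) := by
  have hH_le : ∀ t, |H t| ≤ ⨆ t : ℝ, |H t| := fun t => le_ciSup hHbdd t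
  have hsup_nonneg : 0 ≤ ⨆ t : ℝ, |H t| := (abs_nonneg (H 0)).trans (hH_le 0)
  have hint : Integrable (fun ω => H (Y ω)) Q :=
    Integrable.of_bound (hHmeas.comp hYmeas).aestronglyMeasurable (⨆ t : ℝ, |H t|)
      (Filter.Eventually.of_forall fun ω => hH_le (Y ω))
  have hset : MeasurableSet {ω | M ω < A} := measurableSet_lt hMmeas measurable_const
  rw [← integral_sub hint (hint.indicator hset), mul_assoc, ← integral_mul_const,
    ← Real.norm_eq_abs]
  refine norm_integral_le_of_norm_le (hSint.mul_const _) ?_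
  filter_upwards [hM] with ω hω
  by_cases hlt : M ω < A
  · rw [Set.indicator_of_mem (by simpa using hlt), sub_self, norm_zero]
    positivity
  · rw [Set.indicator_of_notMem (by simpa using hlt), sub_zero, Real.norm_eq_abs]
    have hexp : 1 ≤ Real.exp (S ω) * Real.exp (-A + |x|) := by
      rw [← Real.exp_add]
      exact Real.one_le_exp (by linarith [not_lt.mp hlt])
    calc |H (Y ω)| ≤ ⨆ t : ℝ, |H t| := hH_le (Y ω)
      _ ≤ (⨆ t : ℝ, |H t|) * (Real.exp (S ω) * Real.exp (-A + |x|)) :=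
        le_mul_of_one_le_right hsup_nonneg hexp
      _ = Real.exp (S ω) * ((⨆ t : ℝ, |H t|) * Real.exp (-A + |x|)) := by ring
end

section
/- Let (Ω, ℱ, ℚ) be a probability space, let Z and R be independent real random variables such that e^Z and e^R are integrable and E[e^Z] = 1, let H : ℝ → ℝ be Lipschitz with constant c₁ (i.e. |H(u) − H(v)| ≤ c₁|u − v| for all u, v), and let S₀ > 0 and x ∈ ℝ. Then | E[H(S₀·e^{x + Z + R})] − E[H(S₀·e^{x + Z})] | ≤ c₁·S₀·e^{x}·E[|e^R − 1|]. -/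
open MeasureTheory ProbabilityTheory

/-- A Lipschitz function of an integrable function is integrable on a finite measure space. -/
lemma LipschitzWith.integrable_comp_of_isFiniteMeasure
    {Ω : Type*} [MeasurableSpace Ω] {μ : Measure Ω} [IsFiniteMeasure μ]
    {K : NNReal} {H : ℝ → ℝ} (hH : LipschitzWith K H) {f : Ω → ℝ} (hf : Integrable f μ) :
    Integrable (fun ω => H (f ω)) μ := by
  refine ((hf.norm.const_mul (K : ℝ)).add (integrable_const ‖H 0‖)).mono'
    (hH.continuous.comp_aestronglyMeasurable hf.aestronglyMeasurable) (.of_forall fun ω => ?_)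
  have h := hH.dist_le_mul (f ω) 0
  rw [dist_eq_norm, dist_zero_right] at h
  calc ‖H (f ω)‖ = ‖(H (f ω) - H 0) + H 0‖ := by rw [sub_add_cancel]
    _ ≤ ‖H (f ω) - H 0‖ + ‖H 0‖ := norm_add_le _ _
    _ ≤ K * ‖f ω‖ + ‖H 0‖ := by gcongr

/-- **Jump-truncation error core estimate.** For independent `Z, R` with `E[e^Z] = 1`
and `H` Lipschitz with constant `c₁`,
`|E[H(S₀e^{x+Z+R})] − E[H(S₀e^{x+Z})]| ≤ c₁·S₀·e^x·E[|e^R − 1|]`. -/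
theorem truncation_error_estimate
    {Ω : Type*} [MeasurableSpace Ω] (Q : Measure Ω) [IsProbabilityMeasure Q]
    (Z R : Ω → ℝ) (hZmeas : Measurable Z) (hRmeas : Measurable R)
    (hindep : IndepFun Z R Q)
    (hZint : Integrable (fun ω => Real.exp (Z ω)) Q)
    (hRint : Integrable (fun ω => Real.exp (R ω)) Q)
    (hZmean : ∫ ω, Real.exp (Z ω) ∂Q = 1)
    (H : ℝ → ℝ) (c₁ : ℝ) (hH : ∀ u v : ℝ, |H u - H v| ≤ c₁ * |u - v|)
    (S₀ x : ℝ) (hS₀ : 0 < S₀) :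
    |(∫ ω, H (S₀ * Real.exp (x + Z ω + R ω)) ∂Q)
        - ∫ ω, H (S₀ * Real.exp (x + Z ω)) ∂Q|
      ≤ c₁ * S₀ * Real.exp x * ∫ ω, |Real.exp (R ω) - 1| ∂Q := by
  have hc : 0 ≤ c₁ := by simpa using (abs_nonneg _).trans (hH 1 0)
  have hLip : LipschitzWith ⟨c₁, hc⟩ H := LipschitzWith.of_dist_le_mul hH
  have hZR : Integrable (fun ω => Real.exp (Z ω) * Real.exp (R ω)) Q :=
    (hindep.comp Real.measurable_exp Real.measurable_exp).integrable_mul hZint hRint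
  have hint₁ : Integrable (fun ω => S₀ * Real.exp (x + Z ω + R ω)) Q := by
    simpa only [Real.exp_add, mul_assoc] using (hZR.const_mul (Real.exp x)).const_mul S₀
  have hint₂ : Integrable (fun ω => S₀ * Real.exp (x + Z ω)) Q := by
    simpa only [Real.exp_add] using (hZint.const_mul (Real.exp x)).const_mul S₀
  have hdist (ω : Ω) : c₁ * |S₀ * Real.exp (x + Z ω + R ω) - S₀ * Real.exp (x + Z ω)|
      = c₁ * S₀ * Real.exp x * (Real.exp (Z ω) * |Real.exp (R ω) - 1|) := by
    have h : S₀ * Real.exp (x + Z ω + R ω) - S₀ * Real.exp (x + Z ω)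
        = S₀ * Real.exp x * Real.exp (Z ω) * (Real.exp (R ω) - 1) := by
      simp only [Real.exp_add]; ring
    rw [h, abs_mul, abs_of_pos (by positivity)]
    ring
  have hprod : ∫ ω, Real.exp (Z ω) * |Real.exp (R ω) - 1| ∂Q
      = ∫ ω, |Real.exp (R ω) - 1| ∂Q := by
    rw [hindep.integral_fun_comp_mul_comp (f := Real.exp) (g := fun r => |Real.exp r - 1|)
      hZmeas.aemeasurable hRmeas.aemeasurable (by fun_prop)
      (Continuous.aestronglyMeasurable (by fun_prop)), hZmean, one_mul]
  rw [← integral_sub (hLip.integrable_comp_of_isFiniteMeasure hint₁)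
    (hLip.integrable_comp_of_isFiniteMeasure hint₂)]
  calc |∫ ω, (H (S₀ * Real.exp (x + Z ω + R ω)) - H (S₀ * Real.exp (x + Z ω))) ∂Q|
      ≤ ∫ ω, c₁ * |S₀ * Real.exp (x + Z ω + R ω) - S₀ * Real.exp (x + Z ω)| ∂Q := by
        rw [← Real.norm_eq_abs]
        exact norm_integral_le_of_norm_le ((hint₁.sub hint₂).abs.const_mul c₁)
          (.of_forall fun ω => hH _ _)
    _ = c₁ * S₀ * Real.exp x * ∫ ω, |Real.exp (R ω) - 1| ∂Q := by
        simp only [hdist]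
        rw [integral_const_mul, hprod]
end

section
/- Let g : ℝ → ℝ be a nonnegative integrable function, let v : ℝ → ℝ be differentiable with ‖v'‖_∞ = sup_t |v'(t)| < ∞, let Δx > 0, let K_l ≤ K_r be integers, and let x ∈ ℝ. Then the trapezoidal-type quadrature error satisfies | Σ_{j=K_l}^{K_r} ∫_{(j−1/2)Δx}^{(j+1/2)Δx} ( v(x + jΔx) − v(x + y) )·g(y) dy | ≤ (Δx/2)·‖v'‖_∞·∫_ℝ g(y) dy. -/
open MeasureTheory intervalIntegral

/-- The cells `((j - 1/2) h, (j + 1/2) h]` of a uniform grid are pairwise disjoint. -/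
theorem pairwise_disjoint_Ioc_gridCell {h : ℝ} (hh : 0 ≤ h) :
    Pairwise (Function.onFun Disjoint
      fun j : ℤ => Set.Ioc (((j : ℝ) - 1 / 2) * h) (((j : ℝ) + 1 / 2) * h)) := by
  refine (pairwise_disjoint_on _).2 fun i j hij => ?_
  rw [Set.Ioc_disjoint_Ioc]
  have hij' : (i : ℝ) + 1 ≤ j := by exact_mod_cast hij
  exact (min_le_left _ _).trans
    ((mul_le_mul_of_nonneg_right (by linarith) hh).trans (le_max_right _ _))

/-- The integrals of a nonnegative integrable function over finitely many cells of a uniform grid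
add up to at most its total integral. -/
theorem sum_integral_gridCell_le {g : ℝ → ℝ} (hg0 : ∀ y, 0 ≤ g y) (hg : Integrable g)
    {h : ℝ} (hh : 0 ≤ h) (s : Finset ℤ) :
    ∑ j ∈ s, ∫ y in ((j : ℝ) - 1 / 2) * h..((j : ℝ) + 1 / 2) * h, g y ≤ ∫ y, g y := by
  have hle (j : ℤ) : ((j : ℝ) - 1 / 2) * h ≤ ((j : ℝ) + 1 / 2) * h :=
    mul_le_mul_of_nonneg_right (by linarith) hh
  simp_rw [fun j : ℤ => integral_of_le (μ := volume) (f := g) (hle j)]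
  rw [← integral_biUnion_finset s (fun _ _ => measurableSet_Ioc)
    ((pairwise_disjoint_Ioc_gridCell hh).set_pairwise _) (fun _ _ => hg.integrableOn)]
  exact setIntegral_le_integral hg (Filter.Eventually.of_forall hg0)

/-- A differentiable function with bounded derivative is Lipschitz with constant the supremum of
the absolute value of its derivative. -/
theorem abs_sub_le_iSup_abs_deriv_mul {v : ℝ → ℝ} (hv : Differentiable ℝ v)
    (hbdd : BddAbove (Set.range fun t => |deriv v t|)) (a b : ℝ) :
    |v a - v b| ≤ (⨆ t : ℝ, |deriv v t|) * |a - b| :=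
  convex_univ.norm_image_sub_le_of_norm_deriv_le (fun t _ => hv t)
    (fun t _ => le_ciSup hbdd t) (Set.mem_univ b) (Set.mem_univ a)

/-- **Quadrature error for the jump integral.** The trapezoidal-type quadrature of the
integral term satisfies
`|Σ_j ∫_{(j−1/2)Δx}^{(j+1/2)Δx} (v(x+jΔx) − v(x+y)) g(y) dy| ≤ (Δx/2)·‖v'‖_∞·∫ g`. -/
theorem quadrature_error_jump_term
    (g : ℝ → ℝ) (hg0 : ∀ y, 0 ≤ g y) (hgint : Integrable g (volume : Measure ℝ))
    (v : ℝ → ℝ) (hv : Differentiable ℝ v)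
    (hbdd : BddAbove (Set.range fun t => |deriv v t|))
    (Δx : ℝ) (hΔx : 0 < Δx) (K_l K_r : ℤ) (hK : K_l ≤ K_r) (x : ℝ) :
    |∑ j ∈ Finset.Icc K_l K_r,
        ∫ y in ((j : ℝ) - 1 / 2) * Δx..((j : ℝ) + 1 / 2) * Δx,
          (v (x + (j : ℝ) * Δx) - v (x + y)) * g y|
      ≤ Δx / 2 * (⨆ t : ℝ, |deriv v t|) * ∫ y : ℝ, g y := by
  set M := ⨆ t : ℝ, |deriv v t|
  have hM : 0 ≤ M := Real.iSup_nonneg fun t => abs_nonneg _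
  have hcell (j : ℤ) :
      |∫ y in ((j : ℝ) - 1 / 2) * Δx..((j : ℝ) + 1 / 2) * Δx,
          (v (x + (j : ℝ) * Δx) - v (x + y)) * g y|
        ≤ Δx / 2 * M * ∫ y in ((j : ℝ) - 1 / 2) * Δx..((j : ℝ) + 1 / 2) * Δx, g y := by
    have hle : ((j : ℝ) - 1 / 2) * Δx ≤ ((j : ℝ) + 1 / 2) * Δx :=
      mul_le_mul_of_nonneg_right (by linarith) hΔx.le
    rw [← intervalIntegral.integral_const_mul, ← Real.norm_eq_abs]
    refine norm_integral_le_of_norm_le hle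
      (Filter.Eventually.of_forall fun y hy => ?_) (hgint.const_mul _).intervalIntegrable
    rw [Real.norm_eq_abs, abs_mul, abs_of_nonneg (hg0 y)]
    refine mul_le_mul_of_nonneg_right ?_ (hg0 y)
    have hdist : |x + (j : ℝ) * Δx - (x + y)| ≤ Δx / 2 :=
      abs_le.2 ⟨by linarith [hy.2], by linarith [hy.1]⟩
    calc _ ≤ M * |x + (j : ℝ) * Δx - (x + y)| := abs_sub_le_iSup_abs_deriv_mul hv hbdd _ _
      _ ≤ M * (Δx / 2) := mul_le_mul_of_nonneg_left hdist hM
      _ = Δx / 2 * M := mul_comm _ _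
  refine (Finset.abs_sum_le_sum_abs _ _).trans
    ((Finset.sum_le_sum fun j _ => hcell j).trans ?_)
  rw [← Finset.mul_sum]
  exact mul_le_mul_of_nonneg_left (sum_integral_gridCell_le hg0 hgint hΔx.le _) (by positivity)
end
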